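/- Let (X, μ) be a measure space, 1 < p < ∞, and 0 < A < ∞. Let f₀ and f₁ be nonnegative measurable functions, not μ-almost everywhere equal, with ∫ f₀^p dμ = ∫ f₁^p dμ = A. Let V be a measurable function with V > 0 μ-almost everywhere such that V·f₀ and V·f₁ are μ-integrable. For t ∈ (0,1), set g_t := (1−t)f₀ + t f₁ and f_t := A^{1/p} ‖g_t‖_p^{−1} g_t. Then ∫ V f_t dμ > (1−t) ∫ V f₀ dμ + t ∫ V f₁ dμ. -/

import Mathlib

open MeasureTheory Filter Topology

/-!
Write `g = (1 - t) f₀ + t f₁`. Strict convexity of `s ↦ s ^ p` gives `∫ g ^ p < A`, so `f_t` is `g`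
multiplied by a factor greater than `1`. By linearity the left-hand side is `∫ V g`, which is
positive, so rescaling by that factor strictly increases it.
-/

theorem eq_of_mul_add_mul_eq_zero {R : Type*} [Semiring R] [PartialOrder R] [IsOrderedRing R]
    [NoZeroDivisors R] {a b x y : R} (ha : 0 < a) (hb : 0 < b) (hx : 0 ≤ x) (hy : 0 ≤ y)
    (h : a * x + b * y = 0) : x = y := by
  obtain ⟨hax, hby⟩ :=
    (add_eq_zero_iff_of_nonneg (mul_nonneg ha.le hx) (mul_nonneg hb.le hy)).1 h
  rw [(mul_eq_zero.1 hax).resolve_left ha.ne', (mul_eq_zero.1 hby).resolve_left hb.ne']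

theorem one_lt_rpow_mul_inv_rpow {a b r : ℝ} (ha : 0 < a) (hab : a < b) (hr : 0 < r) :
    1 < b ^ r * (a ^ r)⁻¹ := by
  rw [← div_eq_mul_inv, one_lt_div (Real.rpow_pos_of_pos ha r)]
  exact Real.rpow_lt_rpow ha.le hab hr

section Integral

variable {X : Type*} [MeasurableSpace X] {μ : Measure X}

theorem integral_lt_integral_of_ae_le_of_not_ae_eq {f g : X → ℝ} (hf : Integrable f μ)
    (hg : Integrable g μ) (hle : f ≤ᵐ[μ] g) (hne : ¬ f =ᵐ[μ] g) :
    ∫ x, f x ∂μ < ∫ x, g x ∂μ :=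
  (integral_mono_ae hf hg hle).lt_of_ne fun h => hne ((integral_eq_iff_of_ae_le hf hg hle).1 h)

theorem integral_pos_of_ae_nonneg_of_not_ae_eq_zero {f : X → ℝ} (hf : Integrable f μ)
    (hnn : 0 ≤ᵐ[μ] f) (hne : ¬ f =ᵐ[μ] 0) : 0 < ∫ x, f x ∂μ := by
  simpa only [Pi.zero_apply, integral_zero] using
    integral_lt_integral_of_ae_le_of_not_ae_eq (integrable_zero X ℝ μ) hf hnn
      fun h => hne h.symm

theorem integral_mul_pos_of_ae_pos_left {V f : X → ℝ} (hV : ∀ᵐ x ∂μ, 0 < V x) (hf : 0 ≤ᵐ[μ] f)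
    (hne : ¬ f =ᵐ[μ] 0) (hVf : Integrable (fun x => V x * f x) μ) : 0 < ∫ x, V x * f x ∂μ := by
  refine integral_pos_of_ae_nonneg_of_not_ae_eq_zero hVf ?_ fun hVf0 => hne ?_
  · filter_upwards [hV, hf] with x hVx hfx using mul_nonneg hVx.le hfx
  · filter_upwards [hV, hVf0] with x hVx hx using (mul_eq_zero.1 hx).resolve_left hVx.ne'

theorem integral_const_mul_add_const_mul {f g : X → ℝ} (hf : Integrable f μ) (hg : Integrable g μ)
    (a b : ℝ) : ∫ x, (a * f x + b * g x) ∂μ = a * ∫ x, f x ∂μ + b * ∫ x, g x ∂μ := by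
  rw [integral_add (hf.const_mul a) (hg.const_mul b), integral_const_mul, integral_const_mul]

theorem integral_comp_add_lt_of_strictConvexOn {E : Type*} [AddCommMonoid E] [Module ℝ E]
    {s : Set E} {φ : E → ℝ} (hφ : StrictConvexOn ℝ s φ) {f g : X → E}
    (hfs : ∀ᵐ x ∂μ, f x ∈ s) (hgs : ∀ᵐ x ∂μ, g x ∈ s) (hne : ¬ f =ᵐ[μ] g)
    {a b : ℝ} (ha : 0 < a) (hb : 0 < b) (hab : a + b = 1)
    (hf : Integrable (fun x => φ (f x)) μ) (hg : Integrable (fun x => φ (g x)) μ)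
    (hfg : Integrable (fun x => φ (a • f x + b • g x)) μ) :
    ∫ x, φ (a • f x + b • g x) ∂μ < a * ∫ x, φ (f x) ∂μ + b * ∫ x, φ (g x) ∂μ := by
  rw [← integral_const_mul_add_const_mul hf hg]
  refine integral_lt_integral_of_ae_le_of_not_ae_eq hfg ((hf.const_mul a).add (hg.const_mul b))
    ?_ fun heq => hne ?_
  · filter_upwards [hfs, hgs] with x hfx hgx using hφ.convexOn.2 hfx hgx ha.le hb.le hab
  · filter_upwards [hfs, hgs, heq] with x hfx hgx hx
    by_contra hxne
    exact (hφ.2 hfx hgx hxne ha hb hab).ne hx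

end Integral

section Rpow

variable {X : Type*} [MeasurableSpace X] {μ : Measure X} {p : ℝ} {f g : X → ℝ}

theorem integral_rpow_pos (hp : p ≠ 0) (hf : 0 ≤ᵐ[μ] f) (hne : ¬ f =ᵐ[μ] 0)
    (hfp : Integrable (fun x => f x ^ p) μ) : 0 < ∫ x, f x ^ p ∂μ := by
  refine integral_pos_of_ae_nonneg_of_not_ae_eq_zero hfp ?_ fun hfp0 => hne ?_
  · filter_upwards [hf] with x hx using Real.rpow_nonneg hx p
  · filter_upwards [hf, hfp0] with x hx hxp using (Real.rpow_eq_zero hx hp).1 hxp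

theorem integral_mul_pos_of_integral_rpow_ne_zero {V : X → ℝ} (hp : p ≠ 0)
    (hV : ∀ᵐ x ∂μ, 0 < V x) (hf : 0 ≤ᵐ[μ] f) (hfp : ∫ x, f x ^ p ∂μ ≠ 0)
    (hVf : Integrable (fun x => V x * f x) μ) : 0 < ∫ x, V x * f x ∂μ := by
  refine integral_mul_pos_of_ae_pos_left hV hf (fun hf0 => hfp ?_) hVf
  refine integral_eq_zero_of_ae (hf0.mono fun x hx => ?_)
  simp only [hx, Pi.zero_apply, Real.zero_rpow hp]

theorem aemeasurable_of_aemeasurable_rpow (hp : p ≠ 0) (hf : 0 ≤ᵐ[μ] f)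
    (hfp : AEMeasurable (fun x => f x ^ p) μ) : AEMeasurable f μ :=
  (hfp.pow_const p⁻¹).congr (hf.mono fun _ hx => Real.rpow_rpow_inv hx hp)

theorem integrable_rpow_const_mul_add_const_mul (hp : 1 ≤ p) (hf : 0 ≤ᵐ[μ] f) (hg : 0 ≤ᵐ[μ] g)
    {a b : ℝ} (ha : 0 ≤ a) (hb : 0 ≤ b) (hab : a + b = 1)
    (hfp : Integrable (fun x => f x ^ p) μ) (hgp : Integrable (fun x => g x ^ p) μ) :
    Integrable (fun x => (a * f x + b * g x) ^ p) μ := by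
  have hp0 : p ≠ 0 := (zero_lt_one.trans_le hp).ne'
  have hfm := aemeasurable_of_aemeasurable_rpow hp0 hf hfp.aemeasurable
  have hgm := aemeasurable_of_aemeasurable_rpow hp0 hg hgp.aemeasurable
  refine ((hfp.const_mul a).add (hgp.const_mul b)).mono'
    (((hfm.const_mul a).add (hgm.const_mul b)).pow_const p).aestronglyMeasurable ?_
  filter_upwards [hf, hg] with x hfx hgx
  have hfgx : 0 ≤ a * f x + b * g x := add_nonneg (mul_nonneg ha hfx) (mul_nonneg hb hgx)
  rw [Real.norm_of_nonneg (Real.rpow_nonneg hfgx p)]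
  exact (convexOn_rpow hp).2 hfx hgx ha hb hab

theorem integral_rpow_const_mul_add_const_mul_lt (hp : 1 < p) (hf : 0 ≤ᵐ[μ] f) (hg : 0 ≤ᵐ[μ] g)
    (hne : ¬ f =ᵐ[μ] g) {a b : ℝ} (ha : 0 < a) (hb : 0 < b) (hab : a + b = 1)
    (hfp : Integrable (fun x => f x ^ p) μ) (hgp : Integrable (fun x => g x ^ p) μ) :
    ∫ x, (a * f x + b * g x) ^ p ∂μ < a * ∫ x, f x ^ p ∂μ + b * ∫ x, g x ^ p ∂μ :=
  integral_comp_add_lt_of_strictConvexOn (strictConvexOn_rpow hp) hf hg hne ha hb hab hfp hgp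
    (integrable_rpow_const_mul_add_const_mul hp.le hf hg ha.le hb.le hab hfp hgp)

end Rpow

theorem strict_concavity_linear_functional_general
    {X : Type*} [MeasurableSpace X] {μ : Measure X} {p A : ℝ} (hp : 1 < p) {f₀ f₁ : X → ℝ}
    (h0nn : 0 ≤ᵐ[μ] f₀) (h1nn : 0 ≤ᵐ[μ] f₁)
    (h0int : Integrable (fun x => f₀ x ^ p) μ) (h1int : Integrable (fun x => f₁ x ^ p) μ)
    (h0A : ∫ x, f₀ x ^ p ∂μ ≤ A) (h1A : ∫ x, f₁ x ^ p ∂μ ≤ A) (hne : ¬ f₀ =ᵐ[μ] f₁) {V : X → ℝ}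
    (hV0int : Integrable (fun x => V x * f₀ x) μ) (hV1int : Integrable (fun x => V x * f₁ x) μ)
    {t : ℝ} (ht : t ∈ Set.Ioo (0 : ℝ) 1)
    (hpos : 0 < (1 - t) * ∫ x, V x * f₀ x ∂μ + t * ∫ x, V x * f₁ x ∂μ) :
    (1 - t) * ∫ x, V x * f₀ x ∂μ + t * ∫ x, V x * f₁ x ∂μ <
      ∫ x, V x * (A ^ (1 / p) * ((∫ y, ((1 - t) * f₀ y + t * f₁ y) ^ p ∂μ) ^ (1 / p))⁻¹ *
        ((1 - t) * f₀ x + t * f₁ x)) ∂μ := by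
  have hp0 : 0 < p := zero_lt_one.trans hp
  have ht0 : 0 < t := ht.1
  have hs0 : 0 < 1 - t := sub_pos.2 ht.2
  have hst : 1 - t + t = 1 := sub_add_cancel 1 t
  set G := ∫ y, ((1 - t) * f₀ y + t * f₁ y) ^ p ∂μ
  have hG_lt : G < A := calc
    G < (1 - t) * ∫ x, f₀ x ^ p ∂μ + t * ∫ x, f₁ x ^ p ∂μ :=
      integral_rpow_const_mul_add_const_mul_lt hp h0nn h1nn hne hs0 ht0 hst h0int h1int
    _ ≤ (1 - t) * A + t * A := by gcongr
    _ = A := by ring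
  have hG_pos : 0 < G := by
    refine integral_rpow_pos hp0.ne' ?_ (fun hg0 => hne ?_)
      (integrable_rpow_const_mul_add_const_mul hp.le h0nn h1nn hs0.le ht0.le hst h0int h1int)
    · filter_upwards [h0nn, h1nn] with x h0x h1x
        using add_nonneg (mul_nonneg hs0.le h0x) (mul_nonneg ht0.le h1x)
    · filter_upwards [h0nn, h1nn, hg0] with x h0x h1x hgx
        using eq_of_mul_add_mul_eq_zero hs0 ht0 h0x h1x hgx
  set c := A ^ (1 / p) * (G ^ (1 / p))⁻¹
  have hc : 1 < c := one_lt_rpow_mul_inv_rpow hG_pos hG_lt (one_div_pos.2 hp0)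
  calc (1 - t) * ∫ x, V x * f₀ x ∂μ + t * ∫ x, V x * f₁ x ∂μ
      < c * ((1 - t) * ∫ x, V x * f₀ x ∂μ + t * ∫ x, V x * f₁ x ∂μ) :=
        lt_mul_of_one_lt_left hpos hc
    _ = ∫ x, c * ((1 - t) * (V x * f₀ x) + t * (V x * f₁ x)) ∂μ := by
        rw [integral_const_mul, integral_const_mul_add_const_mul hV0int hV1int]
    _ = ∫ x, V x * (c * ((1 - t) * f₀ x + t * f₁ x)) ∂μ := by
        congr 1 with x
        ring

/-- Strict concavity of `f ↦ ∫ V f dμ` along `L^p`-norm-preserving paths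
(inequality (eqn_concavity) in the proof of Theorem 4.2): if `f₀ ≠ f₁` a.e.,
both nonnegative with `∫ f₀^p = ∫ f₁^p = A`, `V > 0` a.e. with `V f₀, V f₁`
integrable, then the renormalized convex combination
`f_t = A^{1/p} ‖(1−t)f₀ + t f₁‖_p⁻¹ ((1−t)f₀ + t f₁)` satisfies
`∫ V f_t dμ > (1−t) ∫ V f₀ dμ + t ∫ V f₁ dμ` for `t ∈ (0,1)`. -/
theorem strict_concavity_linear_functional
    {X : Type*} [MeasurableSpace X] (μ : Measure X)
    (p A : ℝ) (hp : 1 < p) (hA : 0 < A)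
    (f₀ f₁ : X → ℝ) (h0m : Measurable f₀) (h1m : Measurable f₁)
    (h0nn : ∀ x, 0 ≤ f₀ x) (h1nn : ∀ x, 0 ≤ f₁ x)
    (h0int : Integrable (fun x => f₀ x ^ p) μ)
    (h1int : Integrable (fun x => f₁ x ^ p) μ)
    (h0A : ∫ x, f₀ x ^ p ∂μ = A) (h1A : ∫ x, f₁ x ^ p ∂μ = A)
    (hne : ¬ f₀ =ᵐ[μ] f₁)
    (V : X → ℝ) (hVm : Measurable V) (hVpos : ∀ᵐ x ∂μ, 0 < V x)
    (hV0int : Integrable (fun x => V x * f₀ x) μ)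
    (hV1int : Integrable (fun x => V x * f₁ x) μ)
    (t : ℝ) (ht : t ∈ Set.Ioo (0 : ℝ) 1) :
    (1 - t) * ∫ x, V x * f₀ x ∂μ + t * ∫ x, V x * f₁ x ∂μ <
      ∫ x, V x * (A ^ (1 / p) * ((∫ y, ((1 - t) * f₀ y + t * f₁ y) ^ p ∂μ) ^ (1 / p))⁻¹ *
        ((1 - t) * f₀ x + t * f₁ x)) ∂μ := by
  have hp0 : p ≠ 0 := (zero_lt_one.trans hp).ne'
  have hI₀ := integral_mul_pos_of_integral_rpow_ne_zero hp0 hVpos (ae_of_all μ h0nn)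
    (h0A ▸ hA.ne') hV0int
  have hI₁ := integral_mul_pos_of_integral_rpow_ne_zero hp0 hVpos (ae_of_all μ h1nn)
    (h1A ▸ hA.ne') hV1int
  exact strict_concavity_linear_functional_general hp (ae_of_all μ h0nn) (ae_of_all μ h1nn)
    h0int h1int h0A.le h1A.le hne hV0int hV1int ht
    (add_pos (mul_pos (sub_pos.2 ht.2) hI₀) (mul_pos ht.1 hI₁))
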